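/- Let N ≥ 1, let a, b, c ∈ ℂ with a ≠ 0 and c ≠ 0, and let s ∈ ℂ satisfy s² = b² − 4·a·c and s ≠ 0 (so b + s ≠ 0 and b − s ≠ 0 automatically, since (b+s)(b−s) = 4ac ≠ 0). For each j ∈ {0, …, N}, the vector v_j ∈ ℂ^{N+1} with entries v_j[k] = (2c/(b+s))^k · Σ_{i=0}^{min(k,j)} C(j,i)·C(N−j, k−i)·((b+s)/(b−s))^{i}, k = 0, …, N, is nonzero (v_j[0] = 1) and satisfies B_N(a,b,c) · v_j = λ_j · v_j, where λ_j = j·(b+s)/2 + (N−j)·(b−s)/2. -/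

import Mathlib

open Matrix

/-- The matrix `B_N(a,b,c)`. -/
noncomputable def Bmat (N : ℕ) (a b c : ℂ) : Matrix (Fin (N+1)) (Fin (N+1)) ℂ :=
  Matrix.of fun k l =>
    if (l : ℕ) = (k : ℕ) + 1 then ((k : ℕ) + 1 : ℂ) * a
    else if (l : ℕ) = (k : ℕ) then ((k : ℕ) : ℂ) * b
    else if (l : ℕ) + 1 = (k : ℕ) then -((N - (k : ℕ) + 1 : ℕ) : ℂ) * c
    else 0

open Polynomial in
lemma coeff_one_add_C_mul_X_pow (p : ℂ) (n k : ℕ) :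
    ((1 + C p * X : ℂ[X]) ^ n).coeff k = n.choose k * p ^ k := by
  have h : (1 + C p * X : ℂ[X]) ^ n = ((1 + X) ^ n).comp (C p * X) := by simp
  rw [h, comp_C_mul_X_coeff, coeff_one_add_X_pow]

open Polynomial in
lemma one_add_C_mul_X_mul_derivative_pow (p : ℂ) (n : ℕ) :
    (1 + C p * X : ℂ[X]) * derivative ((1 + C p * X : ℂ[X]) ^ n) =
      C ((n : ℂ) * p) * (1 + C p * X : ℂ[X]) ^ n := by
  cases n with
  | zero => simp
  | succ n =>
    simp only [derivative_pow, derivative_add, derivative_one, derivative_C_mul, derivative_X,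
      map_mul, Nat.add_sub_cancel]
    ring

open Polynomial in
/-- The generating polynomial of the entries of an eigenvector of `Bmat`. -/
noncomputable def eigenPoly (p q : ℂ) (m j : ℕ) : ℂ[X] :=
  (1 + C p * X) ^ m * (1 + C q * X) ^ j

open Polynomial in
lemma eigenPoly_coeff (p r : ℂ) (m j k : ℕ) :
    (eigenPoly p (p * r) m j).coeff k = p ^ k *
      ∑ i ∈ Finset.range (min k j + 1), (j.choose i : ℂ) * (m.choose (k - i) : ℂ) * r ^ i := by
  rw [eigenPoly, mul_comm, coeff_mul, Finset.Nat.sum_antidiagonal_eq_sum_range_succ_mk,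
    Finset.mul_sum]
  symm
  apply Finset.sum_subset_zero_on_sdiff
  · intro i hi
    simp only [Finset.mem_range] at *
    omega
  · intro i hi
    simp only [Finset.mem_sdiff, Finset.mem_range] at hi
    have hji : j < i := by omega
    simp only [coeff_one_add_C_mul_X_pow, Nat.choose_eq_zero_of_lt hji, Nat.cast_zero, zero_mul]
  · intro i hi
    simp only [Finset.mem_range] at hi
    have hk : p ^ k = p ^ i * p ^ (k - i) := by
      rw [← pow_add]
      congr 1
      omega
    simp only [coeff_one_add_C_mul_X_pow, mul_pow, hk]
    ring

open Polynomial in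
lemma eigenPoly_coeff_eq_zero (p q : ℂ) {m j k : ℕ} (hk : m + j < k) :
    (eigenPoly p q m j).coeff k = 0 := by
  apply coeff_eq_zero_of_natDegree_lt
  refine lt_of_le_of_lt ?_ hk
  unfold eigenPoly
  compute_degree

open Polynomial in
lemma eigenPoly_ode (a b c p q : ℂ) (m j : ℕ) (hb : a * (p + q) = b) (hc : a * (p * q) = c) :
    (C a + C b * X + C c * X ^ 2) * derivative (eigenPoly p q m j)
        - C (c * (m + j)) * X * eigenPoly p q m j =
      C (a * (m * p + j * q)) * eigenPoly p q m j := by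
  have hF := one_add_C_mul_X_mul_derivative_pow p m
  have hG := one_add_C_mul_X_mul_derivative_pow q j
  subst hb hc
  simp only [eigenPoly, derivative_mul, map_mul, map_add] at *
  linear_combination C a * (1 + C q * X) * (1 + C q * X) ^ j * hF +
    C a * (1 + C p * X) * (1 + C p * X) ^ m * hG

lemma Bmat_mulVec_apply (N : ℕ) (a b c : ℂ) (f : ℕ → ℂ) (hf : f (N + 1) = 0)
    (k : Fin (N + 1)) :
    (Bmat N a b c).mulVec (fun l => f l) k = ((k : ℕ) + 1) * a * f (k + 1) + (k : ℕ) * b * f k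
      - if (k : ℕ) = 0 then 0 else ((N : ℂ) - (k : ℕ) + 1) * c * f (k - 1) := by
  obtain ⟨k, hk⟩ := k
  simp only [Matrix.mulVec, dotProduct, Bmat, Matrix.of_apply]
  rw [Fin.sum_univ_eq_sum_range (fun l => (if l = k + 1 then ((k : ℂ) + 1) * a
    else if l = k then (k : ℂ) * b
    else if l + 1 = k then -((N - k + 1 : ℕ) : ℂ) * c else 0) * f l) (N + 1)]
  have hsplit : ∀ l, (if l = k + 1 then ((k : ℂ) + 1) * a
      else if l = k then (k : ℂ) * b
      else if l + 1 = k then -((N - k + 1 : ℕ) : ℂ) * c else 0) * f l =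
      (if l = k + 1 then ((k : ℂ) + 1) * a * f l else 0) + (if l = k then (k : ℂ) * b * f l else 0)
      - (if l = k - 1 then if k = 0 then 0 else ((N : ℂ) - k + 1) * c * f l else 0) := by
    intro l
    have hcast : ((N - k + 1 : ℕ) : ℂ) = (N : ℂ) - k + 1 := by
      rw [Nat.cast_add, Nat.cast_sub (by omega), Nat.cast_one]
    rw [hcast]
    split_ifs <;> first | omega | ring
  simp only [hsplit, Finset.sum_add_distrib, Finset.sum_sub_distrib, Finset.sum_ite_eq',
    Finset.mem_range, if_pos hk, if_pos (show k - 1 < N + 1 by omega)]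
  by_cases h : k + 1 < N + 1
  · simp [h]
  · obtain rfl : k = N := by omega
    simp [hf]

open Polynomial in
lemma Bmat_mulVec_eigenPoly (a b c p q : ℂ) (m j : ℕ) (hb : a * (p + q) = b)
    (hc : a * (p * q) = c) :
    (Bmat (m + j) a b c).mulVec (fun l => (eigenPoly p q m j).coeff l) =
      (a * (m * p + j * q)) • fun l : Fin (m + j + 1) => (eigenPoly p q m j).coeff l := by
  ext k
  rw [Bmat_mulVec_apply _ _ _ _ _ (eigenPoly_coeff_eq_zero p q (Nat.lt_succ_self _))]
  have h := congrArg (fun P => P.coeff (k : ℕ)) (eigenPoly_ode a b c p q m j hb hc)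
  simp only [coeff_C_mul, add_mul, coeff_add, coeff_sub, mul_assoc] at h
  simp only [Pi.smul_apply, smul_eq_mul]
  obtain ⟨k, hk⟩ := k
  rcases k with _ | _ | k
  · simp [coeff_derivative, -mul_eq_mul_left_iff] at h ⊢
    linear_combination h
  · simp [coeff_derivative, coeff_X_pow_mul', coeff_X_mul] at h ⊢
    linear_combination h
  · simp [coeff_derivative, coeff_X_pow_mul', coeff_X_mul] at h ⊢
    linear_combination h

theorem stmt_6 (N : ℕ) (hN : 1 ≤ N) (a b c : ℂ) (ha : a ≠ 0) (hc : c ≠ 0)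
    (s : ℂ) (hs : s ^ 2 = b ^ 2 - 4 * a * c) (hs0 : s ≠ 0)
    (v : Fin (N+1) → Fin (N+1) → ℂ)
    (hv : ∀ j k, v j k = (2 * c / (b + s)) ^ (k : ℕ) *
        ∑ i ∈ Finset.range (min (k : ℕ) (j : ℕ) + 1),
          ((j : ℕ).choose i : ℂ) * ((N - (j : ℕ)).choose ((k : ℕ) - i) : ℂ) *
            ((b + s) / (b - s)) ^ i) :
    ∀ j : Fin (N+1), v j 0 = 1 ∧ v j ≠ 0 ∧
      (Bmat N a b c).mulVec (v j) =
        ((j : ℕ) * ((b + s) / 2) + ((N : ℂ) - (j : ℕ)) * ((b - s) / 2)) • v j := by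
  intro j
  have hprod : (b + s) * (b - s) = 4 * a * c := by linear_combination -hs
  have hne : (b + s) * (b - s) ≠ 0 := by
    rw [hprod]
    simp [ha, hc]
  have hp : b + s ≠ 0 := left_ne_zero_of_mul hne
  have hm : b - s ≠ 0 := right_ne_zero_of_mul hne
  have h0 : v j 0 = 1 := by simp [hv]
  refine ⟨h0, fun h => by simp [h] at h0, ?_⟩
  have hvj : v j = fun k : Fin (N + 1) =>
      (eigenPoly (2 * c / (b + s)) (2 * c / (b + s) * ((b + s) / (b - s))) (N - j) j).coeff k := by
    ext k
    rw [hv, eigenPoly_coeff]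
  have hap : a * (2 * c / (b + s)) = (b - s) / 2 := by
    field_simp
    linear_combination -hprod
  have haq : a * (2 * c / (b + s) * ((b + s) / (b - s))) = (b + s) / 2 := by
    field_simp
    linear_combination -hprod
  rw [hvj]
  generalize 2 * c / (b + s) * ((b + s) / (b - s)) = q at *
  generalize 2 * c / (b + s) = p at *
  have hb : a * (p + q) = b := by linear_combination hap + haq
  have hpq : a * (p * q) = c := by
    apply mul_left_cancel₀ ha
    linear_combination a * q * hap + (b - s) / 2 * haq + hprod / 4
  clear hv hvj h0
  obtain ⟨j, hj⟩ := j
  obtain ⟨m, rfl⟩ : ∃ m, N = m + j := ⟨N - j, by omega⟩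
  simp only [Nat.add_sub_cancel]
  rw [Bmat_mulVec_eigenPoly a b c p q m j hb hpq]
  congr 1
  push_cast
  linear_combination m * hap + j * haq
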